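/- arXiv:1509.04456 — 5 statements merged into one kernel-verified Lean document; each statement's English description precedes it below -/
import Mathlib

section
/- Let m ≥ 2 be an integer, let p and s be real numbers with p > m and s ≥ 1, and let n be a positive integer. Then for every continuous m-linear form T : ℓ_p^n × ⋯ × ℓ_p^n → 𝕂 one has (∑_{j=1}^n |T(e_j, …, e_j)|^s)^{1/s} ≤ ‖T‖ · n^{max{m/p + 1/s − 1, 0}}. -/
/-!
Write `a j = T (e_j, …, e_j)`. Averaging `T` over independent signs shows that the diagonal form
`(x⁽¹⁾, …, x⁽ᵐ⁾) ↦ ∑ j, a j * x⁽¹⁾ j * ⋯ * x⁽ᵐ⁾ j` has norm at most `‖T‖`: the vectors number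
`1, …, m - 1` get independent sign patterns and the remaining vector gets the product of all of them,
so that exactly the diagonal coefficients survive, while the `ℓ_p` norms are unchanged
(`sum_signs_apply`, `norm_diagonal_le`).

Let `q = p / (p - m)`, the conjugate exponent of `p / m`. Testing the diagonal form at vectors with
`|x j| = |a j| ^ (1 / (p - m))`, with the phases of the `a j` compensated in one slot, gives
`∑ |a j| ^ q ≤ ‖T‖ * (∑ |a j| ^ q) ^ (m / p)`, that is, `‖a‖_q ≤ ‖T‖` (`sum_rpow_le`).
The passage from `q` to `s` is the comparison of `ℓ_q` and `ℓ_s` norms on `𝕂ⁿ` (`lp_compare`);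
note that `1 / s - 1 / q = m / p + 1 / s - 1`.
-/

open Finset

lemma sum_sign_mul_sign {n : ℕ} (𝕂 : Type*) [RCLike 𝕂] (a b : Fin n) :
    ∑ ε : Fin n → ℤˣ, (((ε a : ℤˣ) : ℤ) : 𝕂) * (((ε b : ℤˣ) : ℤ) : 𝕂)
      = if a = b then (Fintype.card (Fin n → ℤˣ) : 𝕂) else 0 := by
  split_ifs with h
  · subst h
    have : ∀ u : ℤˣ, ((u : ℤ) : 𝕂) * ((u : ℤ) : 𝕂) = 1 := fun u => by
      rcases Int.units_eq_one_or u with h | h <;> simp [h]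
    simp [this]
  -- For `a ≠ b`, flipping the sign at `a` is a bijection of the sign patterns that negates every summand.
  · have key := Fintype.sum_equiv (Equiv.mulLeft (Function.update (1 : Fin n → ℤˣ) a (-1)))
      (fun ε : Fin n → ℤˣ => -((((ε a : ℤˣ) : ℤ) : 𝕂) * (((ε b : ℤˣ) : ℤ) : 𝕂)))
      (fun ε : Fin n → ℤˣ => (((ε a : ℤˣ) : ℤ) : 𝕂) * (((ε b : ℤˣ) : ℤ) : 𝕂))
      (fun ε => by simp [Function.update_of_ne (Ne.symm h)])
    rw [Finset.sum_neg_distrib] at key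
    exact self_eq_neg.mp key.symm

/-- The sign patterns attached to the `k + 1` slots of a multilinear form: the slots `1, …, k` carry
the given patterns `δ`, and slot `0` carries their product. -/
def slotSign {k n : ℕ} (δ : Fin k → Fin n → ℤˣ) : Fin (k + 1) → Fin n → ℤˣ :=
  Fin.cons (fun j => ∏ l, δ l j) δ

/-- The coefficient at `(r 0, …, r k)` of the averaged form vanishes off the diagonal. -/
lemma sum_prod_slotSign {k n : ℕ} (𝕂 : Type*) [RCLike 𝕂] (r : Fin (k + 1) → Fin n) :
    ∑ δ : Fin k → Fin n → ℤˣ, ∏ i, (((slotSign δ i (r i) : ℤˣ) : ℤ) : 𝕂)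
      = if ∀ l : Fin k, r 0 = r l.succ then (Fintype.card (Fin n → ℤˣ) : 𝕂) ^ k else 0 := by
  have h1 : ∀ δ : Fin k → Fin n → ℤˣ, ∏ i, (((slotSign δ i (r i) : ℤˣ) : ℤ) : 𝕂)
      = ∏ l, ((((δ l (r 0) : ℤˣ) : ℤ) : 𝕂) * (((δ l (r l.succ) : ℤˣ) : ℤ) : 𝕂)) := by
    intro δ
    simp [slotSign, Fin.prod_univ_succ, Finset.prod_mul_distrib]
  simp_rw [h1]
  rw [← Fintype.prod_sum (fun (l : Fin k) (ε : Fin n → ℤˣ) =>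
    (((ε (r 0) : ℤˣ) : ℤ) : 𝕂) * (((ε (r l.succ) : ℤˣ) : ℤ) : 𝕂))]
  simp_rw [sum_sign_mul_sign]
  split_ifs with h
  · simp [← h]
  · push Not at h
    obtain ⟨l, hl⟩ := h
    exact Finset.prod_eq_zero (Finset.mem_univ l) (by simp [hl])

lemma sum_signs_apply {𝕂 E : Type*} [RCLike 𝕂] [AddCommGroup E] [Module 𝕂 E] {k n : ℕ}
    (T : MultilinearMap 𝕂 (fun _ : Fin (k + 1) => E) 𝕂) (e : Fin n → E)
    (x : Fin (k + 1) → Fin n → 𝕂) :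
    ∑ δ : Fin k → Fin n → ℤˣ,
        T (fun i => ∑ j, ((((slotSign δ i j : ℤˣ) : ℤ) : 𝕂) * x i j) • e j)
      = (Fintype.card (Fin n → ℤˣ) : 𝕂) ^ k * ∑ j, (∏ i, x i j) * T (fun _ => e j) := by
  have h1 : ∀ δ : Fin k → Fin n → ℤˣ,
      T (fun i => ∑ j, ((((slotSign δ i j : ℤˣ) : ℤ) : 𝕂) * x i j) • e j)
      = ∑ r : Fin (k + 1) → Fin n, (∏ i, (((slotSign δ i (r i) : ℤˣ) : ℤ) : 𝕂)) *
          ((∏ i, x i (r i)) * T (fun i => e (r i))) := by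
    intro δ
    rw [MultilinearMap.map_sum]
    refine Finset.sum_congr rfl fun r _ => ?_
    rw [MultilinearMap.map_smul_univ, Finset.prod_mul_distrib, smul_eq_mul, mul_assoc]
  simp_rw [h1]
  rw [Finset.sum_comm]
  simp_rw [← Finset.sum_mul, sum_prod_slotSign]
  simp_rw [ite_mul, zero_mul]
  rw [← Finset.sum_filter, Finset.mul_sum]
  refine Finset.sum_bij' (fun r _ => r 0) (fun j _ => fun _ => j) ?_ ?_ ?_ ?_ ?_
  · simp
  · simp
  · intro r hr
    simp only [Finset.mem_filter, Finset.mem_univ, true_and] at hr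
    funext i
    refine Fin.cases rfl (fun l => hr l) i
  · simp
  · intro r hr
    simp only [Finset.mem_filter, Finset.mem_univ, true_and] at hr
    have : r = fun _ => r 0 := by
      funext i
      exact Fin.cases rfl (fun l => (hr l).symm) i
    rw [this]

/-- The diagonal part of a multilinear form on `ℓ_p^n` has norm at most that of the form. -/
lemma norm_diagonal_le {𝕂 : Type*} [RCLike 𝕂] {k n : ℕ} {p : ℝ} (hp0 : 0 < p)
    [Fact (1 ≤ ENNReal.ofReal p)]
    (T : ContinuousMultilinearMap 𝕂
      (fun _ : Fin (k + 1) => PiLp (ENNReal.ofReal p) (fun _ : Fin n => 𝕂)) 𝕂)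
    (x : Fin (k + 1) → Fin n → 𝕂) :
    ‖∑ j, (∏ i, x i j) *
        T (fun _ => (WithLp.equiv (ENNReal.ofReal p) (Fin n → 𝕂)).symm (Pi.single j 1))‖
      ≤ ‖T‖ * ∏ i, (∑ j, ‖x i j‖ ^ p) ^ (1 / p) := by
  set e : Fin n → PiLp (ENNReal.ofReal p) (fun _ : Fin n => 𝕂) :=
    fun j => (WithLp.equiv (ENNReal.ofReal p) (Fin n → 𝕂)).symm (Pi.single j 1) with he
  have key := sum_signs_apply T.toMultilinearMap e x
  have hsum : ∀ c : Fin n → 𝕂, ∑ j, c j • e j = WithLp.toLp (ENNReal.ofReal p) c := by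
    intro c
    ext i
    simp [he, Pi.single_apply]
  have hb : ∀ δ : Fin k → Fin n → ℤˣ,
      ‖T.toMultilinearMap (fun i => ∑ j, ((((slotSign δ i j : ℤˣ) : ℤ) : 𝕂) * x i j) • e j)‖
      ≤ ‖T‖ * ∏ i, (∑ j, ‖x i j‖ ^ p) ^ (1 / p) := by
    intro δ
    refine (T.le_opNorm _).trans_eq ?_
    congr 1
    refine Finset.prod_congr rfl fun i _ => ?_
    rw [hsum, PiLp.norm_eq_sum (by rwa [ENNReal.toReal_ofReal hp0.le])]
    rw [ENNReal.toReal_ofReal hp0.le]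
    have : ∀ u : ℤˣ, ‖((u : ℤ) : 𝕂)‖ = 1 := fun u => by
      rcases Int.units_eq_one_or u with h | h <;> simp [h]
    simp [this]
  have h2 := (norm_sum_le _ _).trans (Finset.sum_le_sum fun δ (_ : δ ∈ Finset.univ) => hb δ)
  rw [key, norm_mul, norm_pow, RCLike.norm_natCast, Finset.sum_const, nsmul_eq_mul,
    Finset.card_univ, Fintype.card_fun (α := Fin k), Fintype.card_fin, Nat.cast_pow] at h2
  exact le_of_mul_le_mul_left h2 (by positivity)

/-- The case `s = q = p / (p - m)`, in which the diagonal of `T` is bounded by `‖T‖`. -/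
lemma sum_rpow_le {𝕂 : Type*} [RCLike 𝕂] {k n : ℕ} {p : ℝ} (hp : ((k + 1 : ℕ) : ℝ) < p)
    [Fact (1 ≤ ENNReal.ofReal p)]
    (T : ContinuousMultilinearMap 𝕂
      (fun _ : Fin (k + 1) => PiLp (ENNReal.ofReal p) (fun _ : Fin n => 𝕂)) 𝕂) :
    ∑ j : Fin n,
        ‖T (fun _ => (WithLp.equiv (ENNReal.ofReal p) (Fin n → 𝕂)).symm (Pi.single j 1))‖
          ^ (p / (p - (k + 1 : ℕ)))
      ≤ ‖T‖ ^ (p / (p - (k + 1 : ℕ))) := by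
  have hp0 : 0 < p := lt_of_le_of_lt (Nat.cast_nonneg _) hp
  have hd : 0 < p - (k + 1 : ℕ) := sub_pos.2 hp
  set a : Fin n → 𝕂 := fun j =>
    T (fun _ => (WithLp.equiv (ENNReal.ofReal p) (Fin n → 𝕂)).symm (Pi.single j 1)) with ha
  set m : ℝ := ((k + 1 : ℕ) : ℝ) with hm
  change ∑ j, ‖a j‖ ^ (p / (p - m)) ≤ _
  set S : ℝ := ∑ j, ‖a j‖ ^ (p / (p - m)) with hS
  have hS0 : 0 ≤ S := Finset.sum_nonneg fun j _ => by positivity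
  have hu : ∀ j, ∃ u : 𝕂, ‖u‖ = 1 ∧ u * a j = ((‖a j‖ : ℝ) : 𝕂) := by
    intro j
    obtain ⟨c, hc, hc'⟩ := RCLike.exists_norm_eq_mul_self (a j)
    exact ⟨c, hc, hc'.symm⟩
  choose u hu1 hu2 using hu
  have hdiag := norm_diagonal_le hp0 T
    (Fin.cons (fun j => u j * ((‖a j‖ ^ (1 / (p - m)) : ℝ) : 𝕂))
      (fun _ j => ((‖a j‖ ^ (1 / (p - m)) : ℝ) : 𝕂)))
  have hn1 : ∀ j, ‖((‖a j‖ ^ (1 / (p - m)) : ℝ) : 𝕂)‖ ^ p = ‖a j‖ ^ (p / (p - m)) := by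
    intro j
    rw [RCLike.norm_ofReal, abs_of_nonneg (by positivity), ← Real.rpow_mul (norm_nonneg _)]
    congr 1
    ring
  have hL : ∀ j, (∏ i, (Fin.cons (fun j => u j * ((‖a j‖ ^ (1 / (p - m)) : ℝ) : 𝕂))
      (fun _ j => ((‖a j‖ ^ (1 / (p - m)) : ℝ) : 𝕂)) : Fin (k + 1) → Fin n → 𝕂) i j) * a j
      = ((‖a j‖ ^ (p / (p - m)) : ℝ) : 𝕂) := by
    intro j
    have h3 : ‖a j‖ ^ (p / (p - m)) = ‖a j‖ * (‖a j‖ ^ (1 / (p - m))) ^ (k + 1) := by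
      rw [← Real.rpow_natCast, ← Real.rpow_mul (norm_nonneg _), ← hm]
      have : p / (p - m) = 1 + 1 / (p - m) * m := by
        field_simp
        ring
      rw [this, Real.rpow_add' (norm_nonneg _) (by rw [← this]; positivity), Real.rpow_one]
    rw [h3, Fin.prod_univ_succ]
    simp only [Fin.cons_zero, Fin.cons_succ, Finset.prod_const, Finset.card_univ,
      Fintype.card_fin]
    push_cast
    linear_combination ((‖a j‖ ^ (1 / (p - m)) : ℝ) : 𝕂) ^ (k + 1) * hu2 j
  have hR : ∏ i, (∑ j, ‖(Fin.cons (fun j => u j * ((‖a j‖ ^ (1 / (p - m)) : ℝ) : 𝕂))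
      (fun _ j => ((‖a j‖ ^ (1 / (p - m)) : ℝ) : 𝕂)) : Fin (k + 1) → Fin n → 𝕂) i j‖ ^ p)
        ^ (1 / p) = S ^ (m / p) := by
    rw [Fin.prod_univ_succ]
    simp only [Fin.cons_zero, Fin.cons_succ, Finset.prod_const, Finset.card_univ,
      Fintype.card_fin, norm_mul, hu1, one_mul, hn1]
    rw [← hS, ← pow_succ', ← Real.rpow_natCast, ← Real.rpow_mul hS0, ← hm]
    congr 1
    ring
  have hmain : S ≤ ‖T‖ * S ^ (m / p) := by
    rw [hR] at hdiag
    refine le_trans (le_of_eq ?_) hdiag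
    change _ = ‖∑ j, _ * a j‖
    simp_rw [hL]
    rw [← RCLike.ofReal_sum, RCLike.norm_ofReal, ← hS, abs_of_nonneg hS0]
  rcases hS0.eq_or_lt with h0 | hpos
  · rw [← h0]
    positivity
  · have h4 : S ^ ((p - m) / p) ≤ ‖T‖ := by
      have : S = S ^ ((p - m) / p) * S ^ (m / p) := by
        rw [← Real.rpow_add hpos, ← add_div, sub_add_cancel, div_self hp0.ne', Real.rpow_one]
      exact le_of_mul_le_mul_right (this.symm.trans_le hmain) (by positivity)
    calc S = (S ^ ((p - m) / p)) ^ (p / (p - m)) := by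
          rw [← Real.rpow_mul hS0, div_mul_div_cancel₀ hp0.ne', div_self hd.ne', Real.rpow_one]
      _ ≤ _ := by gcongr

/-- Comparison of the `ℓ_s` and `ℓ_q` norms in dimension `n`. -/
lemma lp_compare {n : ℕ} (hn : 0 < n) {q s M : ℝ} (hq : 0 < q) (hs : 0 < s) (hM : 0 ≤ M)
    (a : Fin n → ℝ) (ha : ∀ j, 0 ≤ a j) (h : ∑ j, a j ^ q ≤ M ^ q) :
    (∑ j, a j ^ s) ^ (1 / s) ≤ M * (n : ℝ) ^ max (1 / s - 1 / q) 0 := by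
  have hn' : (0 : ℝ) < n := by exact_mod_cast hn
  have hA0 : 0 ≤ ∑ j, a j ^ s := Finset.sum_nonneg fun j _ => Real.rpow_nonneg (ha j) _
  have hB0 : 0 ≤ ∑ j, a j ^ q := Finset.sum_nonneg fun j _ => Real.rpow_nonneg (ha j) _
  rcases le_total q s with hqs | hsq
  · rw [max_eq_right (sub_nonpos.2 (one_div_le_one_div_of_le hq hqs)), Real.rpow_zero, mul_one]
    have haM : ∀ j, a j ≤ M := fun j => by
      have : a j ^ q ≤ M ^ q :=
        (Finset.single_le_sum (f := fun j => a j ^ q) (fun i _ => Real.rpow_nonneg (ha i) _)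
          (Finset.mem_univ j)).trans h
      exact (Real.rpow_le_rpow_iff (ha j) hM hq).1 this
    have h1 : ∑ j, a j ^ s ≤ M ^ s := by
      have hsplit : ∀ y : ℝ, 0 ≤ y → y ^ s = y ^ q * y ^ (s - q) := fun y hy => by
        rw [← Real.rpow_add' hy (by rw [add_sub_cancel]; exact hs.ne'), add_sub_cancel]
      calc ∑ j, a j ^ s = ∑ j, a j ^ q * a j ^ (s - q) :=
            Finset.sum_congr rfl fun j _ => hsplit _ (ha j)
        _ ≤ ∑ j, a j ^ q * M ^ (s - q) := Finset.sum_le_sum fun j _ =>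
            mul_le_mul_of_nonneg_left (Real.rpow_le_rpow (ha j) (haM j) (sub_nonneg.2 hqs))
              (Real.rpow_nonneg (ha j) _)
        _ = (∑ j, a j ^ q) * M ^ (s - q) := by rw [Finset.sum_mul]
        _ ≤ M ^ q * M ^ (s - q) := mul_le_mul_of_nonneg_right h (Real.rpow_nonneg hM _)
        _ = M ^ s := (hsplit M hM).symm
    calc _ ≤ (M ^ s) ^ (1 / s) := Real.rpow_le_rpow hA0 h1 (by positivity)
      _ = M := by rw [← Real.rpow_mul hM, mul_one_div_cancel hs.ne', Real.rpow_one]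
  · rw [max_eq_left (sub_nonneg.2 (one_div_le_one_div_of_le hs hsq))]
    have h1 := Real.rpow_sum_le_const_mul_sum_rpow_of_nonneg (s := Finset.univ)
      (f := fun j => a j ^ s) (p := q / s) ((one_le_div hs).2 hsq)
      (fun j _ => Real.rpow_nonneg (ha j) _)
    have h2 : ∀ j, (a j ^ s) ^ (q / s) = a j ^ q := fun j => by
      rw [← Real.rpow_mul (ha j), mul_div_cancel₀ _ hs.ne']
    simp only [h2, Finset.card_univ, Fintype.card_fin] at h1
    have h3 : (∑ j, a j ^ s) ^ (q / s) ≤ (n : ℝ) ^ (q / s - 1) * M ^ q :=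
      h1.trans (mul_le_mul_of_nonneg_left h (by positivity))
    calc (∑ j, a j ^ s) ^ (1 / s) = ((∑ j, a j ^ s) ^ (q / s)) ^ (1 / q) := by
          rw [← Real.rpow_mul hA0]
          congr 1
          field_simp
      _ ≤ ((n : ℝ) ^ (q / s - 1) * M ^ q) ^ (1 / q) :=
          Real.rpow_le_rpow (Real.rpow_nonneg hA0 _) h3 (by positivity)
      _ = M * (n : ℝ) ^ (1 / s - 1 / q) := by
          rw [Real.mul_rpow (by positivity) (by positivity), ← Real.rpow_mul hn'.le,
            ← Real.rpow_mul hM, mul_one_div_cancel hq.ne', Real.rpow_one, mul_comm]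
          congr 2
          field_simp

/-- For `m ≥ 2`, `p > m`, `s ≥ 1` and every continuous `m`-linear form
`T : ℓ_p^n × ⋯ × ℓ_p^n → 𝕂`,
`(∑_{j=1}^n |T(e_j,…,e_j)|^s)^{1/s} ≤ ‖T‖ · n^{max{m/p + 1/s − 1, 0}}`. -/
theorem stmt_0 {𝕂 : Type*} [RCLike 𝕂] (m : ℕ) (hm : 2 ≤ m) (p s : ℝ)
    (hp : (m : ℝ) < p) (hs : 1 ≤ s) [Fact (1 ≤ ENNReal.ofReal p)]
    (n : ℕ) (hn : 0 < n)
    (T : ContinuousMultilinearMap 𝕂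
      (fun _ : Fin m => PiLp (ENNReal.ofReal p) (fun _ : Fin n => 𝕂)) 𝕂) :
    (∑ j : Fin n,
        ‖T (fun _ => (WithLp.equiv (ENNReal.ofReal p) (Fin n → 𝕂)).symm (Pi.single j 1))‖ ^ s)
        ^ (1 / s)
      ≤ ‖T‖ * (n : ℝ) ^ max ((m : ℝ) / p + 1 / s - 1) 0 := by
  obtain ⟨k, rfl⟩ : ∃ k, m = k + 1 := ⟨m - 1, by omega⟩
  have hp0 : 0 < p := lt_of_le_of_lt (Nat.cast_nonneg _) hp
  have hd : 0 < p - (k + 1 : ℕ) := sub_pos.2 hp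
  have h := lp_compare hn (div_pos hp0 hd) (lt_of_lt_of_le one_pos hs) (norm_nonneg T)
    _ (fun j => norm_nonneg _) (sum_rpow_le hp T)
  have he : 1 / s - 1 / (p / (p - (k + 1 : ℕ))) = ((k + 1 : ℕ) : ℝ) / p + 1 / s - 1 := by
    rw [one_div_div, sub_div, div_self hp0.ne']
    ring
  rwa [he] at h
end

section
/- Let m ≥ 2 be an integer, let p and s be real numbers with p > m and s ≥ 1, and let t be a real number. If there exists a constant C > 0 such that for every positive integer n and every continuous m-linear form T : ℓ_p^n × ⋯ × ℓ_p^n → 𝕂 the inequality (∑_{j=1}^n |T(e_j, …, e_j)|^s)^{1/s} ≤ C · ‖T‖ · n^t holds, then t ≥ max{m/p + 1/s − 1, 0}. In other words, the exponent max{m/p + 1/s − 1, 0} in the preceding estimate is optimal. -/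
/-!
For a set `S` of `k` coordinates, test the estimate on the diagonal form
`T_S(x¹, …, x^m) = ∑_{j ∈ S} x¹_j ⋯ x^m_j`. Its values at `(e_j, …, e_j)` are `1` for `j ∈ S` and
`0` otherwise, so the left-hand side is `k^{1/s}`, while Hölder's inequality with `m` exponents `p`
and one exponent `(1 - m/p)⁻¹` gives `‖T_S‖ ≤ k^{1 - m/p}` (`norm_diagForm_le`). Hence
`k^{1/s + m/p - 1} ≤ C n^t` whenever `1 ≤ k ≤ n`. Letting `n → ∞`, the choice `k = n` forces
`t ≥ m/p + 1/s - 1`, and the choice `k = 1` forces `t ≥ 0` (`le_of_forall_rpow_le`).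
-/

/-- Hölder's inequality for `m` normalized vectors of `ℓ_p`, `m < p`, and the indicator function
of `S`: it is weighted AM-GM, with weights `1/p` (`m` times) and `1 - m/p`, applied to `a i j ^ p`
and `1 / #S` and summed over `j ∈ S`. -/
lemma sum_prod_le_of_sum_rpow_le_one {ι : Type*} {m : ℕ} {p : ℝ} (hp0 : 0 < p)
    (hp : (m : ℝ) < p) (S : Finset ι) (hS : S.Nonempty) (a : Fin m → ι → ℝ)
    (ha : ∀ i j, 0 ≤ a i j) (hsum : ∀ i, ∑ j ∈ S, a i j ^ p ≤ 1) :
    ∑ j ∈ S, ∏ i, a i j ≤ (S.card : ℝ) ^ (1 - (m : ℝ) / p) := by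
  have hk : (0 : ℝ) < S.card := by exact_mod_cast hS.card_pos
  have hw : 0 ≤ 1 - (m : ℝ) / p := by
    rw [sub_nonneg, div_le_one hp0]; exact hp.le
  have key : ∀ j ∈ S, ((S.card : ℝ)⁻¹) ^ (1 - (m : ℝ) / p) * ∏ i, a i j ≤
      (1 - (m : ℝ) / p) * (S.card : ℝ)⁻¹ + ∑ i, 1 / p * a i j ^ p := by
    intro j _
    have h := Real.geom_mean_le_arith_mean_weighted (Finset.univ : Finset (Option (Fin m)))
      (fun o => o.elim (1 - (m : ℝ) / p) (fun _ => 1 / p))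
      (fun o => o.elim (S.card : ℝ)⁻¹ (fun i => a i j ^ p))
      (by
        rintro (_ | i) _
        · exact hw
        · exact (one_div_pos.2 hp0).le)
      (by
        rw [Fintype.sum_option]
        simp
        ring)
      (by
        rintro (_ | i) _
        · exact (inv_pos.2 hk).le
        · exact Real.rpow_nonneg (ha i j) p)
    rw [Fintype.sum_option, Fintype.prod_option] at h
    simp only [Option.elim] at h
    have h2 : ∀ i, (a i j ^ p) ^ (1 / p) = a i j := fun i => by
      rw [one_div, Real.rpow_rpow_inv (ha i j) hp0.ne']
    simpa only [h2] using h
  have h := Finset.sum_le_sum key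
  rw [← Finset.mul_sum, Finset.sum_add_distrib, Finset.sum_const, nsmul_eq_mul,
    Finset.sum_comm] at h
  have h3 : ∑ i : Fin m, ∑ j ∈ S, 1 / p * a i j ^ p ≤ m / p := by
    calc _ ≤ ∑ _i : Fin m, 1 / p := by
          refine Finset.sum_le_sum fun i _ => ?_
          rw [← Finset.mul_sum]
          exact mul_le_of_le_one_right (one_div_pos.2 hp0).le (hsum i)
      _ = m / p := by simp [div_eq_mul_inv]
  have h4 : (S.card : ℝ) * ((1 - (m : ℝ) / p) * (S.card : ℝ)⁻¹) = 1 - (m : ℝ) / p := by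
    field_simp
  have h5 : ((S.card : ℝ)⁻¹) ^ (1 - (m : ℝ) / p) * ∑ j ∈ S, ∏ i, a i j ≤ 1 := by linarith
  rw [Real.inv_rpow hk.le, inv_mul_le_iff₀ (Real.rpow_pos_of_pos hk _), mul_one] at h5
  exact h5

/-- The diagonal form `(x¹, …, x^m) ↦ ∑_{j ∈ S} x¹_j ⋯ x^m_j` on `ℓ_p^n`. -/
noncomputable def diagForm (𝕂 : Type*) [RCLike 𝕂] (m n : ℕ) (p : ℝ)
    [Fact (1 ≤ ENNReal.ofReal p)] (S : Finset (Fin n)) :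
    ContinuousMultilinearMap 𝕂
      (fun _ : Fin m => PiLp (ENNReal.ofReal p) (fun _ : Fin n => 𝕂)) 𝕂 :=
  ∑ j ∈ S, (ContinuousMultilinearMap.mkPiAlgebra 𝕂 (Fin m) 𝕂).compContinuousLinearMap
    (fun _ => PiLp.proj (ENNReal.ofReal p) (fun _ : Fin n => 𝕂) j)

lemma diagForm_apply {𝕂 : Type*} [RCLike 𝕂] {m n : ℕ} {p : ℝ}
    [Fact (1 ≤ ENNReal.ofReal p)] (S : Finset (Fin n))
    (x : Fin m → PiLp (ENNReal.ofReal p) (fun _ : Fin n => 𝕂)) :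
    diagForm 𝕂 m n p S x = ∑ j ∈ S, ∏ i, x i j := by
  simp [diagForm]

lemma norm_diagForm_le {𝕂 : Type*} [RCLike 𝕂] {m n : ℕ} {p : ℝ}
    [Fact (1 ≤ ENNReal.ofReal p)] (hp0 : 0 < p) (hp : (m : ℝ) < p) (S : Finset (Fin n))
    (hS : S.Nonempty) :
    ‖diagForm 𝕂 m n p S‖ ≤ (S.card : ℝ) ^ (1 - (m : ℝ) / p) := by
  refine ContinuousMultilinearMap.opNorm_le_bound (by positivity) fun x => ?_
  by_cases hx : ∃ i, x i = 0
  · obtain ⟨i, hi⟩ := hx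
    rw [ContinuousMultilinearMap.map_coord_zero _ i hi, norm_zero]
    positivity
  push Not at hx
  have hpos : ∀ i, 0 < ‖x i‖ := fun i => norm_pos_iff.2 (hx i)
  have hpr : (ENNReal.ofReal p).toReal = p := ENNReal.toReal_ofReal hp0.le
  have hnorm : ∀ i, ∑ j, ‖x i j‖ ^ p = ‖x i‖ ^ p := fun i => by
    rw [PiLp.norm_eq_sum (by rw [hpr]; exact hp0), hpr, one_div, Real.rpow_inv_rpow _ hp0.ne']
    exact Finset.sum_nonneg fun j _ => Real.rpow_nonneg (norm_nonneg _) _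
  have key := sum_prod_le_of_sum_rpow_le_one hp0 hp S hS (fun i j => ‖x i j‖ / ‖x i‖)
    (fun i j => by positivity) (fun i => by
      calc ∑ j ∈ S, (‖x i j‖ / ‖x i‖) ^ p ≤ ∑ j, (‖x i j‖ / ‖x i‖) ^ p :=
            Finset.sum_le_sum_of_subset_of_nonneg (Finset.subset_univ _)
              fun j _ _ => by positivity
        _ = 1 := by
          simp_rw [Real.div_rpow (norm_nonneg _) (norm_nonneg _)]
          rw [← Finset.sum_div, hnorm, div_self (Real.rpow_pos_of_pos (hpos i) p).ne'])
  simp_rw [Finset.prod_div_distrib] at key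
  rw [← Finset.sum_div, div_le_iff₀ (Finset.prod_pos fun i _ => hpos i)] at key
  refine le_trans ?_ key
  rw [diagForm_apply]
  refine (norm_sum_le _ _).trans (le_of_eq ?_)
  simp [norm_prod]

lemma le_of_forall_rpow_le {a t C : ℝ}
    (h : ∀ n : ℕ, 0 < n → (n : ℝ) ^ a ≤ C * (n : ℝ) ^ t) : a ≤ t := by
  by_contra! hlt
  have htend := (tendsto_rpow_atTop (sub_pos.2 hlt)).comp (tendsto_natCast_atTop_atTop (R := ℝ))
  obtain ⟨n, hn, hn0⟩ :=
    ((htend.eventually_gt_atTop C).and (Filter.eventually_gt_atTop 0)).exists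
  have hn' : (0 : ℝ) < n := by exact_mod_cast hn0
  have := h n hn0
  simp only [Function.comp] at hn
  rw [Real.rpow_sub hn', lt_div_iff₀ (Real.rpow_pos_of_pos hn' t)] at hn
  linarith

/-- Optimality of the exponent `max{m/p + 1/s − 1, 0}`: if a constant `C > 0`
makes the estimate with exponent `t` hold for all `n` and all `m`-linear forms `T`,
then `t ≥ max{m/p + 1/s − 1, 0}`. -/
theorem stmt_1 {𝕂 : Type*} [RCLike 𝕂] (m : ℕ) (hm : 2 ≤ m) (p s t : ℝ)
    (hp : (m : ℝ) < p) (hs : 1 ≤ s) [Fact (1 ≤ ENNReal.ofReal p)]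
    (h : ∃ C : ℝ, 0 < C ∧ ∀ (n : ℕ), 0 < n →
      ∀ T : ContinuousMultilinearMap 𝕂
        (fun _ : Fin m => PiLp (ENNReal.ofReal p) (fun _ : Fin n => 𝕂)) 𝕂,
      (∑ j : Fin n,
          ‖T (fun _ => (WithLp.equiv (ENNReal.ofReal p) (Fin n → 𝕂)).symm (Pi.single j 1))‖ ^ s)
          ^ (1 / s)
        ≤ C * ‖T‖ * (n : ℝ) ^ t) :
    max ((m : ℝ) / p + 1 / s - 1) 0 ≤ t := by
  obtain ⟨C, hC, h⟩ := h
  have hp0 : 0 < p := lt_of_le_of_lt (Nat.cast_nonneg m) hp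
  have hs0 : s ≠ 0 := by linarith
  have hm0 : m ≠ 0 := by omega
  have main : ∀ (n : ℕ), 0 < n → ∀ S : Finset (Fin n), S.Nonempty →
      (S.card : ℝ) ^ ((m : ℝ) / p + 1 / s - 1) ≤ C * (n : ℝ) ^ t := by
    intro n hn S hS
    have hk : (0 : ℝ) < S.card := by exact_mod_cast hS.card_pos
    have h1 := h n hn (diagForm 𝕂 m n p S)
    have hval : ∀ j : Fin n, ‖diagForm 𝕂 m n p S (fun _ =>
        (WithLp.equiv (ENNReal.ofReal p) (Fin n → 𝕂)).symm (Pi.single j 1))‖ ^ s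
        = if j ∈ S then 1 else 0 := by
      intro j
      rw [diagForm_apply]
      simp only [WithLp.equiv_symm_apply, Finset.prod_const, Finset.card_univ,
        Fintype.card_fin, Pi.single_apply, ite_pow, one_pow, zero_pow hm0, Finset.sum_ite_eq']
      split_ifs <;> simp [hs0]
    simp_rw [hval] at h1
    rw [Finset.sum_ite_mem, Finset.univ_inter, Finset.sum_const, nsmul_eq_mul, mul_one] at h1
    have h2 : (S.card : ℝ) ^ (1 / s) ≤ C * (S.card : ℝ) ^ (1 - (m : ℝ) / p) * (n : ℝ) ^ t := by
      refine h1.trans ?_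
      gcongr
      exact norm_diagForm_le hp0 hp S hS
    have h3 : (m : ℝ) / p + 1 / s - 1 = 1 / s - (1 - (m : ℝ) / p) := by ring
    rw [h3, Real.rpow_sub hk, div_le_iff₀ (Real.rpow_pos_of_pos hk _)]
    linarith
  refine max_le (le_of_forall_rpow_le (C := C) fun n hn => ?_)
    (le_of_forall_rpow_le (C := C) fun n hn => ?_)
  · have := main n hn Finset.univ ⟨⟨0, hn⟩, Finset.mem_univ _⟩
    simpa using this
  · have := main n hn {⟨0, hn⟩} (Finset.singleton_nonempty _)
    simpa using this
end

section
/- Let m ≥ 2 be an integer, let p and s be real numbers with 1 < p < 2 and s ≥ 2/m, and let n be a positive integer. Then for every continuous m-linear form T : ℓ_p^n × ⋯ × ℓ_p^n → 𝕂 one has (∑_{j=1}^n |T(e_j, …, e_j)|^s)^{1/s} ≤ ‖T‖ · n^{(2ms + 2p − spm)/(2sp)}. -/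
/-!
Each canonical vector has norm one, so `|T(e_j, …, e_j)| ≤ ‖T‖` and the left-hand side is at most
`‖T‖ · n^{1/s}`. The exponent on the right equals `1/s + m (1/p - 1/2)`, which is at least `1/s`
because `p < 2`; as `n ≥ 1`, the bound follows.
-/

/-- For `m ≥ 2`, `1 < p < 2`, `s ≥ 2/m` and every continuous `m`-linear form
`T : ℓ_p^n × ⋯ × ℓ_p^n → 𝕂`,
`(∑_{j=1}^n |T(e_j,…,e_j)|^s)^{1/s} ≤ ‖T‖ · n^{(2ms + 2p − spm)/(2sp)}`. -/
theorem stmt_3 {𝕂 : Type*} [RCLike 𝕂] (m : ℕ) (hm : 2 ≤ m) (p s : ℝ)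
    (hp1 : 1 < p) (hp2 : p < 2) (hs : 2 / (m : ℝ) ≤ s) [Fact (1 ≤ ENNReal.ofReal p)]
    (n : ℕ) (hn : 0 < n)
    (T : ContinuousMultilinearMap 𝕂
      (fun _ : Fin m => PiLp (ENNReal.ofReal p) (fun _ : Fin n => 𝕂)) 𝕂) :
    (∑ j : Fin n,
        ‖T (fun _ => (WithLp.equiv (ENNReal.ofReal p) (Fin n → 𝕂)).symm (Pi.single j 1))‖ ^ s)
        ^ (1 / s)
      ≤ ‖T‖ * (n : ℝ) ^ ((2 * (m : ℝ) * s + 2 * p - s * p * (m : ℝ)) / (2 * s * p)) := by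
  have hm0 : (0 : ℝ) < m := by exact_mod_cast (by omega : 0 < m)
  have hs0 : 0 < s := lt_of_lt_of_le (by positivity) hs
  have hp0 : 0 < p := by linarith
  have hn1 : (1 : ℝ) ≤ n := by exact_mod_cast hn
  have hT : ∀ j : Fin n,
      ‖T (fun _ => (WithLp.equiv (ENNReal.ofReal p) (Fin n → 𝕂)).symm (Pi.single j 1))‖
        ≤ ‖T‖ := by
    intro j
    refine (T.le_opNorm _).trans (le_of_eq ?_)
    have he : ‖(WithLp.equiv (ENNReal.ofReal p) (Fin n → 𝕂)).symm (Pi.single j 1)‖ = 1 := by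
      have h := PiLp.norm_single (ENNReal.ofReal p) (fun _ : Fin n => 𝕂) j (1 : 𝕂)
      rw [norm_one] at h
      exact h
    simp only [he, Finset.prod_const_one, mul_one]
  have hexp : 1 / s ≤ (2 * (m : ℝ) * s + 2 * p - s * p * (m : ℝ)) / (2 * s * p) := by
    rw [div_le_div_iff₀ hs0 (by positivity)]
    nlinarith [mul_pos (mul_pos hm0 (mul_pos hs0 hs0)) (sub_pos.mpr hp2)]
  calc _ ≤ (∑ _j : Fin n, ‖T‖ ^ s) ^ (1 / s) := by
        gcongr with j
        exact hT j
    _ = ‖T‖ * (n : ℝ) ^ (1 / s) := by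
        rw [Finset.sum_const, Finset.card_univ, Fintype.card_fin, nsmul_eq_mul,
          Real.mul_rpow (by positivity) (by positivity), ← Real.rpow_mul (norm_nonneg _),
          mul_one_div_cancel hs0.ne', Real.rpow_one, mul_comm]
    _ ≤ _ := by
        gcongr
end

section
/- Let m ≥ 2 be an integer, let p be a real number with p > m, and let n be a positive integer. Let A : ℓ_p^n × ⋯ × ℓ_p^n → 𝕂 be the m-linear form defined by A(x^{(1)}, …, x^{(m)}) = ∑_{j=1}^n x_j^{(1)} ⋯ x_j^{(m)}. Then ‖A‖ ≤ n^{(p−m)/p}. -/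
/-!
The bound is the generalized Hölder inequality with `m` exponents `p` and the constant function `1`
in `ℓ_q`, where `1/q = 1 - m/p`. It is obtained here directly from the weighted AM-GM inequality:
after normalizing each vector to `∑ⱼ aᵢⱼ ^ p = 1`, apply AM-GM for each `j` to the numbers
`aᵢⱼ ^ p` (weight `1/p` each) and `1/n` (weight `1 - m/p`), then sum over `j`.
The right-hand sides add up to `1`.
-/

/-- Generalized Hölder inequality for normalized vectors, tested against the constant function. -/
lemma sum_prod_le_of_normalized (m : ℕ) (p : ℝ) (hp0 : 0 < p) (hp : (m : ℝ) < p)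
    (n : ℕ) (hn : 0 < n) (a : Fin m → Fin n → ℝ) (ha : ∀ i j, 0 ≤ a i j)
    (hs : ∀ i, ∑ j, a i j ^ p = 1) :
    ∑ j, ∏ i, a i j ≤ (n : ℝ) ^ ((p - (m : ℝ)) / p) := by
  have hn' : (0 : ℝ) < n := by exact_mod_cast hn
  set θ : ℝ := (p - (m : ℝ)) / p with hθ
  have hθ0 : 0 ≤ θ := div_nonneg (by linarith) hp0.le
  have hw : θ + m * (1 / p) = 1 := by rw [hθ]; field_simp; ring
  have key : ∀ j, (1 / (n : ℝ)) ^ θ * ∏ i, a i j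
      ≤ θ * (1 / n) + ∑ i, 1 / p * a i j ^ p := by
    intro j
    -- The index `none` carries the constant term `1/n`.
    have h := Real.geom_mean_le_arith_mean_weighted (Finset.univ : Finset (Option (Fin m)))
      (fun o => o.elim θ fun _ => 1 / p) (fun o => o.elim (1 / (n : ℝ)) fun i => a i j ^ p)
      (by rintro (_ | i) -
          · exact hθ0
          · exact (one_div_pos.2 hp0).le)
      (by simpa [Fintype.sum_option] using hw)
      (by rintro (_ | i) -
          · exact (one_div_pos.2 hn').le
          · exact Real.rpow_nonneg (ha i j) p)
    have e : ∀ i, (a i j ^ p) ^ (1 / p) = a i j := fun i => by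
      rw [← Real.rpow_mul (ha i j), mul_one_div_cancel hp0.ne', Real.rpow_one]
    simpa only [Fintype.sum_option, Fintype.prod_option, Option.elim, e] using h
  have hsum : (1 / (n : ℝ)) ^ θ * ∑ j, ∏ i, a i j ≤ 1 := by
    rw [Finset.mul_sum]
    refine (Finset.sum_le_sum fun j _ => key j).trans (le_of_eq ?_)
    rw [Finset.sum_add_distrib, Finset.sum_comm]
    simp_rw [← Finset.mul_sum, hs]
    simp only [Finset.sum_const, Finset.card_univ, Fintype.card_fin, nsmul_eq_mul, mul_one]
    refine Eq.trans ?_ hw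
    field_simp
  rw [one_div, Real.inv_rpow hn'.le, inv_mul_le_iff₀ (Real.rpow_pos_of_pos hn' θ), mul_one] at hsum
  exact hsum

/-- For `m ≥ 2`, `p > m`, the `m`-linear form
`A(x^{(1)},…,x^{(m)}) = ∑_{j=1}^n x_j^{(1)} ⋯ x_j^{(m)}` on `ℓ_p^n × ⋯ × ℓ_p^n`
satisfies `‖A‖ ≤ n^{(p−m)/p}`. -/
theorem stmt_6 {𝕂 : Type*} [RCLike 𝕂] (m : ℕ) (hm : 2 ≤ m) (p : ℝ)
    (hp : (m : ℝ) < p) [Fact (1 ≤ ENNReal.ofReal p)]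
    (n : ℕ) (hn : 0 < n)
    (A : ContinuousMultilinearMap 𝕂
      (fun _ : Fin m => PiLp (ENNReal.ofReal p) (fun _ : Fin n => 𝕂)) 𝕂)
    (hA : ∀ x, A x = ∑ j : Fin n, ∏ i : Fin m,
      (WithLp.equiv (ENNReal.ofReal p) (Fin n → 𝕂)) (x i) j) :
    ‖A‖ ≤ (n : ℝ) ^ ((p - (m : ℝ)) / p) := by
  have hp0 : 0 < p := lt_of_le_of_lt (Nat.cast_nonneg m) hp
  have hpt : (ENNReal.ofReal p).toReal = p := ENNReal.toReal_ofReal hp0.le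
  refine ContinuousMultilinearMap.opNorm_le_bound (by positivity) fun x => ?_
  by_cases hx : ∃ i, x i = 0
  · obtain ⟨i, hi⟩ := hx
    rw [A.map_coord_zero i hi, norm_zero]
    positivity
  push Not at hx
  have hN : ∀ i, 0 < ‖x i‖ := fun i => norm_pos_iff.2 (hx i)
  have hNp : ∀ i, ‖x i‖ ^ p = ∑ j, ‖x i j‖ ^ p := fun i => by
    have h := PiLp.norm_eq_sum (by rw [hpt]; exact hp0) (x i)
    rw [hpt] at h
    rw [h, ← Real.rpow_mul (Finset.sum_nonneg fun j _ => by positivity),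
      one_div_mul_cancel hp0.ne', Real.rpow_one]
  have h := sum_prod_le_of_normalized m p hp0 hp n hn (fun i j => ‖x i j‖ / ‖x i‖)
    (fun i j => by positivity) (fun i => by
      simp_rw [Real.div_rpow (norm_nonneg _) (norm_nonneg _)]
      rw [← Finset.sum_div, ← hNp, div_self (Real.rpow_pos_of_pos (hN i) p).ne'])
  simp_rw [Finset.prod_div_distrib] at h
  rw [← Finset.sum_div, div_le_iff₀ (Finset.prod_pos fun i _ => hN i)] at h
  refine le_trans ?_ h
  rw [hA]
  refine (norm_sum_le _ _).trans (le_of_eq ?_)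
  simp_rw [norm_prod]
  rfl
end

section
/- Let m and n be positive integers and let p_1, …, p_m ≥ 1 be real numbers with 1/p_1 + ⋯ + 1/p_m ≤ 1. Let A : ℓ_{p_1}^n × ⋯ × ℓ_{p_m}^n → 𝕂 be the m-linear form defined by A(x^{(1)}, …, x^{(m)}) = ∑_{j=1}^n x_j^{(1)} ⋯ x_j^{(m)}. Then ‖A‖ = n^{1 − (1/p_1 + ⋯ + 1/p_m)}. -/
/-!
The upper bound `|A x| ≤ n^(1 - s) ∏ ‖x i‖`, with `s = ∑ 1 / p i`, is Hölder's inequality for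
`m + 1` factors, the extra factor being the constant vector `1` with exponent weight `1 - s`.
It is obtained by normalising the vectors and applying the weighted arithmetic-geometric mean
inequality coordinate by coordinate (`prod_mul_rpow_le`), then summing over the coordinates.
The bound is attained at the tuple of all-ones vectors, where `A` equals `n` and the `i`-th norm
is `n^(1 / p i)`.
-/

/-- Weighted AM-GM with weights `1 / p i`, the missing mass `1 - ∑ 1 / p i` being put on an
extra value `c`. -/
lemma prod_mul_rpow_le {m : ℕ} (p : Fin m → ℝ) (hp : ∀ i, 1 ≤ p i)
    (hsum : ∑ i, 1 / p i ≤ 1) (y : Fin m → ℝ) (hy : ∀ i, 0 ≤ y i) (c : ℝ) (hc : 0 ≤ c) :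
    (∏ i, y i) * c ^ (1 - ∑ i, 1 / p i)
      ≤ ∑ i, 1 / p i * y i ^ p i + (1 - ∑ i, 1 / p i) * c := by
  have hp0 : ∀ i, 0 < p i := fun i => lt_of_lt_of_le one_pos (hp i)
  have h := Real.geom_mean_le_arith_mean_weighted (Finset.univ : Finset (Option (Fin m)))
    (fun o => o.elim (1 - ∑ i, 1 / p i) (fun i => 1 / p i))
    (fun o => o.elim c (fun i => y i ^ p i))
    (by
      rintro (_ | i) -
      · simpa using hsum
      · exact (one_div_pos.2 (hp0 i)).le)
    (by simp [Fintype.sum_option])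
    (by
      rintro (_ | i) -
      · exact hc
      · exact Real.rpow_nonneg (hy i) _)
  simp only [Fintype.prod_option, Fintype.sum_option, Option.elim] at h
  have e : ∀ i, (y i ^ p i) ^ (1 / p i) = y i := fun i => by
    rw [← Real.rpow_mul (hy i), mul_one_div_cancel (hp0 i).ne', Real.rpow_one]
  simp only [e] at h
  linarith

/-- Hölder's inequality for several finite sequences, normalised so that each of them has
`∑ j, y i j ^ p i = 1`. -/
lemma sum_prod_le {m n : ℕ} (hn : 0 < n) (p : Fin m → ℝ) (hp : ∀ i, 1 ≤ p i)
    (hsum : ∑ i, 1 / p i ≤ 1) (y : Fin m → Fin n → ℝ) (hy : ∀ i j, 0 ≤ y i j)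
    (hy1 : ∀ i, ∑ j, y i j ^ p i = 1) :
    ∑ j, ∏ i, y i j ≤ (n : ℝ) ^ (1 - ∑ i, 1 / p i) := by
  have hn' : (0 : ℝ) < n := by exact_mod_cast hn
  -- The constant sequence `1 / n` supplies the missing Hölder factor: it sums to `1`.
  have h := Finset.sum_le_sum fun j (_ : j ∈ (Finset.univ : Finset (Fin n))) =>
    prod_mul_rpow_le p hp hsum (fun i => y i j) (fun i => hy i j) (n : ℝ)⁻¹ (by positivity)
  rw [← Finset.sum_mul, Finset.sum_add_distrib, Finset.sum_comm] at h
  simp only [← Finset.mul_sum, hy1, Finset.sum_const, Finset.card_univ, Fintype.card_fin,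
    nsmul_eq_mul, mul_one] at h
  rw [mul_inv_cancel₀ hn'.ne', Real.inv_rpow hn'.le, ← div_eq_mul_inv, div_le_iff₀ (by positivity)] at h
  simpa using h

/-- For positive integers `m, n` and reals `p_1,…,p_m ≥ 1` with
`1/p_1 + ⋯ + 1/p_m ≤ 1`, the `m`-linear form
`A(x^{(1)},…,x^{(m)}) = ∑_{j=1}^n x_j^{(1)} ⋯ x_j^{(m)}` satisfies
`‖A‖ = n^{1 − (1/p_1 + ⋯ + 1/p_m)}`. -/
theorem stmt_12 {𝕂 : Type*} [RCLike 𝕂] (m n : ℕ) (hm : 0 < m) (hn : 0 < n)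
    (p : Fin m → ℝ) (hp : ∀ i, 1 ≤ p i) [∀ i, Fact (1 ≤ ENNReal.ofReal (p i))]
    (hsum : ∑ i : Fin m, 1 / p i ≤ 1)
    (A : ContinuousMultilinearMap 𝕂
      (fun i : Fin m => PiLp (ENNReal.ofReal (p i)) (fun _ : Fin n => 𝕂)) 𝕂)
    (hA : ∀ x, A x = ∑ j : Fin n, ∏ i : Fin m,
      (WithLp.equiv (ENNReal.ofReal (p i)) (Fin n → 𝕂)) (x i) j) :
    ‖A‖ = (n : ℝ) ^ (1 - ∑ i : Fin m, 1 / p i) := by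
  have hn' : (0 : ℝ) < n := by exact_mod_cast hn
  have hp0 : ∀ i, 0 < p i := fun i => lt_of_lt_of_le one_pos (hp i)
  have htr : ∀ i, (ENNReal.ofReal (p i)).toReal = p i := fun i =>
    ENNReal.toReal_ofReal (hp0 i).le
  have hnorm : ∀ i (v : PiLp (ENNReal.ofReal (p i)) (fun _ : Fin n => 𝕂)),
      ‖v‖ = (∑ j, ‖v j‖ ^ p i) ^ (1 / p i) := fun i v => by
    rw [PiLp.norm_eq_sum (by rw [htr]; exact hp0 i), htr]
  apply le_antisymm
  · refine A.opNorm_le_bound (by positivity) fun x => ?_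
    by_cases hx : ∃ i, x i = 0
    · obtain ⟨i, hi⟩ := hx
      rw [A.map_coord_zero i hi, norm_zero]
      positivity
    push Not at hx
    have hN : ∀ i, 0 < ‖x i‖ := fun i => norm_pos_iff.2 (hx i)
    have h := sum_prod_le hn p hp hsum (fun i j => ‖x i j‖ / ‖x i‖)
      (fun i j => by positivity) (fun i => by
        simp only [Real.div_rpow (norm_nonneg _) (norm_nonneg _), ← Finset.sum_div]
        have e : ‖x i‖ ^ p i = ∑ j, ‖x i j‖ ^ p i := by
          rw [hnorm, ← Real.rpow_mul (by positivity), one_div_mul_cancel (hp0 i).ne',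
            Real.rpow_one]
        rw [← e, div_self (Real.rpow_pos_of_pos (hN i) _).ne'])
    simp only [Finset.prod_div_distrib, ← Finset.sum_div] at h
    rw [div_le_iff₀ (Finset.prod_pos fun i _ => hN i)] at h
    refine le_trans ?_ h
    rw [hA]
    refine (norm_sum_le _ _).trans (le_of_eq ?_)
    simp [norm_prod]
  · let x : ∀ i : Fin m, PiLp (ENNReal.ofReal (p i)) (fun _ : Fin n => 𝕂) :=
      fun i => WithLp.toLp _ (fun _ => 1)
    have h := A.le_opNorm x
    have hx : ∀ i, ‖x i‖ = (n : ℝ) ^ (1 / p i) := fun i => by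
      rw [hnorm]; simp [x]
    have hAx : ‖A x‖ = n := by
      rw [hA]; simp [x]
    rw [hAx, Finset.prod_congr rfl fun i _ => hx i, ← Real.rpow_sum_of_pos hn'] at h
    rw [Real.rpow_sub hn', Real.rpow_one, div_le_iff₀ (by positivity)]
    exact h
end
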